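/- Suppose E[V(y Z)] < ∞ for every y > 0, where V is the convex conjugate of the utility function U, and suppose in addition that U is continuous on (0,∞). Then the value function x ↦ u(x, U) is continuous on (0, ∞). -/

import Mathlib

/-!
The value function is locally uniformly continuous. Given `f ∈ C(x)`, a level `a > 0` and a
fraction `θ ∈ [0, 1]`, the claim `g = f - θ (f - a)⁺` costs at most `(1 - θ) x + θ a`, so every
slightly smaller budget `x'` is met by some small `θ`. It coincides with `f` on `{f ≤ a}` and stays
above `a` elsewhere, so no utility is lost near `0`, where `U` may drop to `-∞`.

The loss `U(f) - U(g)` is small in mean, uniformly over `f ∈ C(X)`. On `{a < f ≤ K}` it is small by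
uniform continuity of `U` on `[a, K]`. On `{f > K}` Fenchel's inequality bounds it by
`H + y Z f` with `H = |U(a)| + V(y Z)⁺` integrable; the term `y Z f` is small in mean for small `y`,
and `H ≤ (H - M Z)⁺ + (M / K) Z f` there, where `E[(H - M Z)⁺] → 0` as `M → ∞` because `Z > 0`
(`exists_small_excess`). `exists_loss_bound` combines these estimates. Fenchel's inequality also
shows that the value function is finite, hence continuity can be checked in `ℝ`.
-/

open MeasureTheory Filter Set Topology ENNReal

noncomputable section

/-- The utility function extended to all of `ℝ`, with value `−∞` on `(−∞,0)` and
`U(0) := lim_{x ↓ 0} U(x)` (here, by monotonicity, the infimum over `(0,∞)`). -/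
def Uext (U : ℝ → ℝ) : ℝ → EReal := fun x =>
  if 0 < x then (U x : EReal)
  else if x = 0 then ⨅ z : {z : ℝ // 0 < z}, ((U z.1 : ℝ) : EReal)
  else ⊥

/-- A (possibly non-concave) utility function. -/
structure IsUtility (U : ℝ → ℝ) : Prop where
  mono : ∀ ⦃x y : ℝ⦄, 0 < x → x ≤ y → U x ≤ U y
  nonconst : ∃ x y : ℝ, 0 < x ∧ 0 < y ∧ U x ≠ U y
  usc : UpperSemicontinuousOn U (Set.Ioi 0)
  growth : Filter.Tendsto (fun x => U x / x) Filter.atTop (nhds 0)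
  pos_limit : ∃ x : ℝ, 0 < x ∧ 0 < U x

/-- Concavity for `EReal`-valued functions on `ℝ`. -/
def ERealConcave (g : ℝ → EReal) : Prop :=
  ∀ x y : ℝ, ∀ t : ℝ, 0 ≤ t → t ≤ 1 →
    ((t : ℝ) : EReal) * g x + (((1 - t) : ℝ) : EReal) * g y ≤ g (t * x + (1 - t) * y)

/-- `Uc` is the concave envelope of the utility `U`: the smallest concave function
dominating (the extension of) `U`. -/
def IsConcaveEnvelope (U : ℝ → ℝ) (Uc : ℝ → EReal) : Prop :=
  ERealConcave Uc ∧ (∀ x : ℝ, Uext U x ≤ Uc x) ∧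
    ∀ g : ℝ → EReal, ERealConcave g → (∀ x : ℝ, Uext U x ≤ g x) → ∀ x : ℝ, Uc x ≤ g x

/-- The convex conjugate `V(y) = sup_{x > 0} (U(x) − x y)`. -/
def conj (U : ℝ → ℝ) (y : ℝ) : ℝ :=
  sSup ((fun x => U x - x * y) '' Set.Ioi (0 : ℝ))

/-- The subdifferential of a convex function `V` (viewed on `(0,∞)`). -/
def subdiff (V : ℝ → ℝ) (y : ℝ) : Set ℝ :=
  {q : ℝ | ∀ z : ℝ, 0 < z → V y + q * (z - y) ≤ V z}

/-- The extended asymptotic elasticity `EAE(V) = limsup_{y ↓ 0} sup_{q ∈ ∂V(y)} |q| y / V(y)`. -/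
def EAE (V : ℝ → ℝ) : EReal :=
  Filter.limsup (fun y : ℝ => ⨆ q ∈ subdiff V y, (((|q| * y / V y) : ℝ) : EReal))
    (nhdsWithin (0 : ℝ) (Set.Ioi 0))

/-- The positive part of an extended real number, as an element of `ℝ≥0∞`. -/
def erealPos (a : EReal) : ℝ≥0∞ := if a = ⊤ then ⊤ else ENNReal.ofReal a.toReal

/-- The expectation of an `EReal`-valued function: `E[g] = E[g⁺] − E[g⁻]`, with the
convention `E[g] = −∞` whenever the negative part `g⁻` is not integrable. -/
def eexp {Ω : Type*} [MeasurableSpace Ω] (μ : Measure Ω) (g : Ω → EReal) : EReal :=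
  if (∫⁻ ω, erealPos (-(g ω)) ∂μ) < ⊤ then
    ((∫⁻ ω, erealPos (g ω) ∂μ : ℝ≥0∞) : EReal) - (((∫⁻ ω, erealPos (-(g ω)) ∂μ).toReal : ℝ) : EReal)
  else ⊥

/-- The set `C(x)` of attainable terminal liquidation values: nonnegative measurable `f`
with `E[Z f] ≤ x`. -/
def Cset {Ω : Type*} [MeasurableSpace Ω] (μ : Measure Ω) (Z : Ω → ℝ) (x : ℝ) :
    Set (Ω → ℝ) :=
  {f | Measurable f ∧ (∀ ω, 0 ≤ f ω) ∧
    (∫⁻ ω, ENNReal.ofReal (Z ω * f ω) ∂μ) ≤ ENNReal.ofReal x}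

/-- The value function `u(x, W) = sup {E[W(f)] : f ∈ C(x)}`. -/
def valueFn {Ω : Type*} [MeasurableSpace Ω] (μ : Measure Ω) (Z : Ω → ℝ)
    (W : ℝ → EReal) (x : ℝ) : EReal :=
  ⨆ f ∈ Cset μ Z x, eexp μ (fun ω => W (f ω))

end

/-! ### The extended utility and its conjugate -/

lemma Uext_of_pos (U : ℝ → ℝ) {x : ℝ} (hx : 0 < x) : Uext U x = (U x : EReal) := by
  simp [Uext, hx]

lemma Uext_mono {U : ℝ → ℝ} (hU : IsUtility U) : Monotone (Uext U) := by
  intro x y hxy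
  rcases lt_trichotomy x 0 with hx | hx | hx
  · simp [Uext, hx.not_gt, hx.ne]
  · subst hx
    rcases hxy.eq_or_lt with rfl | hy
    · exact le_rfl
    · rw [Uext_of_pos U hy]
      simp only [Uext, lt_irrefl, if_false, if_true]
      exact iInf_le (fun z : {z : ℝ // 0 < z} => ((U z.1 : ℝ) : EReal)) ⟨y, hy⟩
  · rw [Uext_of_pos U hx, Uext_of_pos U (hx.trans_le hxy)]
    exact_mod_cast hU.mono hx hxy

lemma conj_bddAbove {U : ℝ → ℝ} (hU : IsUtility U) {y : ℝ} (hy : 0 < y) :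
    BddAbove ((fun x => U x - x * y) '' Set.Ioi (0 : ℝ)) := by
  obtain ⟨N, hN⟩ := (hU.growth.eventually (gt_mem_nhds hy)).exists_forall_of_atTop
  refine ⟨max 0 (U (max N 1)), ?_⟩
  rintro _ ⟨x, hx, rfl⟩
  have hx : 0 < x := hx
  rcases le_total (max N 1) x with h | h
  · have := hN x ((le_max_left _ _).trans h)
    rw [div_lt_iff₀ hx] at this
    refine le_trans ?_ (le_max_left _ _)
    simp only
    linarith
  · have := hU.mono hx h
    refine le_trans ?_ (le_max_right _ _)
    simp only
    nlinarith

/-- Fenchel's inequality. -/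
lemma le_conj_add {U : ℝ → ℝ} (hU : IsUtility U) {x y : ℝ} (hx : 0 < x) (hy : 0 < y) :
    U x ≤ conj U y + x * y := by
  have : U x - x * y ≤ conj U y := le_csSup (conj_bddAbove hU hy) ⟨x, hx, rfl⟩
  linarith

lemma conj_anti {U : ℝ → ℝ} (hU : IsUtility U) {y z : ℝ} (hy : 0 < y) (hyz : y ≤ z) :
    conj U z ≤ conj U y := by
  refine csSup_le ⟨_, 1, Set.mem_Ioi.2 one_pos, rfl⟩ ?_
  rintro _ ⟨x, hx, rfl⟩
  have hx : 0 < x := hx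
  have := le_conj_add hU hx hy
  simp only
  nlinarith

lemma measurable_conj_comp {U : ℝ → ℝ} (hU : IsUtility U) {Ω : Type*} [MeasurableSpace Ω]
    {g : Ω → ℝ} (hg : Measurable g) (hpos : ∀ ω, 0 < g ω) :
    Measurable (fun ω => conj U (g ω)) := by
  -- `conj` is antitone on `(0, ∞)` only; precomposing with `exp` makes it antitone on `ℝ`.
  have h : Antitone (fun t => conj U (Real.exp t)) := fun s t hst =>
    conj_anti hU (Real.exp_pos s) (Real.exp_le_exp.2 hst)
  have h2 := h.measurable.comp (Real.measurable_log.comp hg)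
  convert h2 using 2 with ω
  simp [Real.exp_log (hpos ω)]

/-! ### Extended expectations -/

lemma erealPos_coe (r : ℝ) : erealPos (r : EReal) = ENNReal.ofReal r := by
  simp [erealPos]

lemma measurable_erealPos : Measurable erealPos := by
  unfold erealPos
  exact Measurable.ite (measurableSet_singleton _) measurable_const
    (ENNReal.measurable_ofReal.comp measurable_ereal_toReal)

/-- The relation `h ≤ k + l` with all terms moved to the side where they are nonnegative, so that it
can be integrated in `ℝ≥0∞`. -/
lemma erealPos_cross {h k : EReal} {l : ℝ≥0∞} (hh : h ≠ ⊤) (hk : k ≠ ⊤)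
    (hle : h ≤ k + (l : EReal)) :
    erealPos h + erealPos (-k) ≤ erealPos k + erealPos (-h) + l := by
  induction h with
  | top => exact absurd rfl hh
  | bot => simp [erealPos]
  | coe h =>
    induction k with
    | top => exact absurd rfl hk
    | bot => simp at hle
    | coe k =>
      induction l with
      | top => simp
      | coe l =>
        have hle' : h ≤ k + l := by
          rw [EReal.coe_nnreal_eq_coe_real] at hle
          exact_mod_cast hle
        rw [← EReal.coe_neg, ← EReal.coe_neg]
        simp only [erealPos_coe]
        rw [← ENNReal.ofReal_coe_nnreal (p := l)]
        simp only [ENNReal.ofReal]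
        norm_cast
        rw [← NNReal.coe_le_coe]
        simp only [NNReal.coe_add, Real.coe_toNNReal', Real.toNNReal_coe]
        have e1 := max_zero_sub_eq_self h
        have e2 := max_zero_sub_eq_self k
        linarith

lemma erealPos_neg_le {h k : EReal} {l : ℝ≥0∞} (hk : k ≠ ⊤)
    (hle : h ≤ k + (l : EReal)) :
    erealPos (-k) ≤ erealPos (-h) + l := by
  by_cases hh : h = ⊤
  · subst hh
    have : (l : EReal) = ⊤ := by
      by_contra hl
      exact (EReal.add_ne_top hk hl) (top_le_iff.1 hle)
    rw [EReal.coe_ennreal_eq_top_iff] at this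
    simp [this]
  · induction h with
    | top => exact absurd rfl hh
    | bot => simp [erealPos]
    | coe h =>
      induction k with
      | top => exact absurd rfl hk
      | bot => simp at hle
      | coe k =>
        induction l with
        | top => simp
        | coe l =>
          have hle' : h ≤ k + l := by
            rw [EReal.coe_nnreal_eq_coe_real] at hle
            exact_mod_cast hle
          rw [← EReal.coe_neg, ← EReal.coe_neg]
          simp only [erealPos_coe]
          rw [← ENNReal.ofReal_coe_nnreal (p := l)]
          refine le_trans (ENNReal.ofReal_le_ofReal ?_) ENNReal.ofReal_add_le
          linarith

/-- If `h ≤ k + l` pointwise with `l ≥ 0` of finite mean, then `E[h] ≤ E[k] + E[l]`, whatever the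
integrability of `h` and `k`. -/
lemma eexp_le_add {Ω : Type*} [MeasurableSpace Ω] {μ : Measure Ω} {h k : Ω → EReal}
    {l : Ω → ℝ≥0∞} (hhm : Measurable h) (hkm : Measurable k) (hlm : Measurable l)
    (hh : ∀ ω, h ω ≠ ⊤) (hk : ∀ ω, k ω ≠ ⊤) (hle : ∀ ω, h ω ≤ k ω + (l ω : EReal))
    {ε : ℝ} (hε : 0 ≤ ε) (hl : ∫⁻ ω, l ω ∂μ ≤ ENNReal.ofReal ε) :
    eexp μ h ≤ eexp μ k + (ε : EReal) := by
  have key : ∫⁻ ω, erealPos (h ω) ∂μ + ∫⁻ ω, erealPos (-(k ω)) ∂μ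
      ≤ ∫⁻ ω, erealPos (k ω) ∂μ + ∫⁻ ω, erealPos (-(h ω)) ∂μ + ∫⁻ ω, l ω ∂μ := by
    have hhm' : Measurable fun ω => erealPos (h ω) := measurable_erealPos.comp hhm
    have hkm' : Measurable fun ω => erealPos (k ω) := measurable_erealPos.comp hkm
    rw [← lintegral_add_left hhm', ← lintegral_add_left hkm',
      ← lintegral_add_right _ hlm]
    exact lintegral_mono fun ω => erealPos_cross (hh ω) (hk ω) (hle ω)
  have key2 : ∫⁻ ω, erealPos (-(k ω)) ∂μ ≤ ∫⁻ ω, erealPos (-(h ω)) ∂μ + ∫⁻ ω, l ω ∂μ := by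
    rw [← lintegral_add_right _ hlm]
    exact lintegral_mono fun ω => erealPos_neg_le (hk ω) (hle ω)
  unfold eexp
  generalize ∫⁻ ω, erealPos (h ω) ∂μ = A at *
  generalize ∫⁻ ω, erealPos (-(h ω)) ∂μ = B at *
  generalize ∫⁻ ω, erealPos (k ω) ∂μ = A' at *
  generalize ∫⁻ ω, erealPos (-(k ω)) ∂μ = B' at *
  generalize ∫⁻ ω, l ω ∂μ = L at *
  by_cases hB : B < ⊤
  · have hL : L < ⊤ := hl.trans_lt ENNReal.ofReal_lt_top
    have hB' : B' < ⊤ := key2.trans_lt (ENNReal.add_lt_top.2 ⟨hB, hL⟩)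
    rw [if_pos hB, if_pos hB']
    by_cases hA' : A' = ⊤
    · subst hA'
      rw [EReal.coe_ennreal_top, EReal.top_sub_coe, EReal.top_add_coe]
      exact le_top
    · have hA : A ≠ ⊤ := by
        have : A + B' < ⊤ := key.trans_lt
          (ENNReal.add_lt_top.2 ⟨ENNReal.add_lt_top.2 ⟨lt_top_iff_ne_top.2 hA', hB⟩, hL⟩)
        exact (ENNReal.add_lt_top.1 this).1.ne
      have hLr : L.toReal ≤ ε := ENNReal.toReal_le_of_le_ofReal hε hl
      have keyr := ENNReal.toReal_mono
        (ENNReal.add_ne_top.2 ⟨ENNReal.add_ne_top.2 ⟨hA', hB.ne⟩, hL.ne⟩) key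
      rw [ENNReal.toReal_add hA hB'.ne, ENNReal.toReal_add
        (ENNReal.add_ne_top.2 ⟨hA', hB.ne⟩) hL.ne, ENNReal.toReal_add hA' hB.ne] at keyr
      rw [← EReal.coe_ennreal_toReal hA, ← EReal.coe_ennreal_toReal hA']
      norm_cast
      linarith
  · rw [if_neg hB]
    exact bot_le

/-! ### Uniform estimate of the loss of utility -/

/-- Since `Z > 0`, the excess of an integrable `H` over `M Z` vanishes in mean as `M → ∞`. -/
lemma exists_small_excess {Ω : Type*} [MeasurableSpace Ω] {μ : Measure Ω}
    {Z H : Ω → ℝ} (hZ : Measurable Z) (hZpos : ∀ ω, 0 < Z ω) (hH : Measurable H)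
    (hHint : ∫⁻ ω, ENNReal.ofReal (H ω) ∂μ ≠ ⊤) {ε : ℝ} (hε : 0 < ε) :
    ∃ M : ℝ, 0 ≤ M ∧ ∫⁻ ω, ENNReal.ofReal (H ω - M * Z ω) ∂μ ≤ ENNReal.ofReal ε := by
  have ht : Tendsto (fun n : ℕ => ∫⁻ ω, ENNReal.ofReal (H ω - n * Z ω) ∂μ) atTop
      (𝓝 (∫⁻ _, 0 ∂μ)) := by
    refine tendsto_lintegral_of_dominated_convergence (fun ω => ENNReal.ofReal (H ω))
      (fun n => (hH.sub (hZ.const_mul _)).ennreal_ofReal) (fun n => ae_of_all _ fun ω =>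
        ENNReal.ofReal_le_ofReal ?_) hHint (ae_of_all _ fun ω => ?_)
    · have := mul_nonneg (Nat.cast_nonneg (α := ℝ) n) (hZpos ω).le
      linarith
    · refine tendsto_const_nhds.congr' ?_
      obtain ⟨N, hN⟩ := exists_nat_ge (H ω / Z ω)
      filter_upwards [eventually_ge_atTop N] with n hn
      have h1 : H ω / Z ω ≤ n := hN.trans (by exact_mod_cast hn)
      rw [div_le_iff₀ (hZpos ω)] at h1
      exact (ENNReal.ofReal_of_nonpos (by linarith)).symm
  rw [lintegral_zero] at ht
  obtain ⟨n, hn⟩ := (ht.eventually (gt_mem_nhds (ENNReal.ofReal_pos.2 hε))).exists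
  exact ⟨n, Nat.cast_nonneg n, hn.le⟩

/-- The dual hypothesis yields integrability of `V(y Z)⁺`: its expectation cannot be `-∞` by
convention, because `V(y Z) ≥ U(1) - y Z`. -/
lemma lintegral_conj_ne_top {Ω : Type*} [MeasurableSpace Ω] {μ : Measure Ω}
    [IsProbabilityMeasure μ] {Z : Ω → ℝ} (hZpos : ∀ ω, 0 < Z ω) (hZint : Integrable Z μ)
    {U : ℝ → ℝ} (hU : IsUtility U) {y : ℝ} (hy : 0 < y)
    (hV : eexp μ (fun ω => ((conj U (y * Z ω) : ℝ) : EReal)) < ⊤) :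
    ∫⁻ ω, ENNReal.ofReal (conj U (y * Z ω)) ∂μ ≠ ⊤ := by
  have hneg : ∫⁻ ω, erealPos (-((conj U (y * Z ω) : ℝ) : EReal)) ∂μ < ⊤ := by
    have hi : Integrable (fun ω => y * Z ω - U 1) μ := (hZint.const_mul y).sub (integrable_const _)
    refine lt_of_le_of_lt (lintegral_mono fun ω => ?_) hi.lintegral_lt_top
    rw [← EReal.coe_neg, erealPos_coe]
    refine ENNReal.ofReal_le_ofReal ?_
    have := le_conj_add hU one_pos (mul_pos hy (hZpos ω))
    linarith
  intro htop
  unfold eexp at hV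
  rw [if_pos hneg] at hV
  simp only [erealPos_coe, htop, EReal.coe_ennreal_top, EReal.top_sub_coe] at hV
  exact lt_irrefl _ hV

lemma ofReal_add_max_add_mul {a c d : ℝ} (ha : 0 ≤ a) (b : ℝ) (hc : 0 ≤ c) (hd : 0 ≤ d) :
    ENNReal.ofReal (a + max b 0 + c * d) =
      ENNReal.ofReal a + ENNReal.ofReal b + ENNReal.ofReal c * ENNReal.ofReal d := by
  rw [ENNReal.ofReal_add (add_nonneg ha (le_max_right _ _)) (mul_nonneg hc hd),
    ENNReal.ofReal_add ha (le_max_right _ _), ENNReal.ofReal_mul hc, ENNReal.ofReal_max]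
  simp

lemma shrink_ge {a θ t : ℝ} (hθ : θ ≤ 1) (ht : a ≤ t) :
    a ≤ t - θ * max (t - a) 0 := by
  rw [max_eq_left (by linarith)]
  nlinarith

/-- Shrinking the part of the claim above the level `a` by a small fraction `θ` costs at most `ε`
of expected utility, uniformly over the claims of cost at most `X`. -/
lemma exists_loss_bound {Ω : Type*} [MeasurableSpace Ω] {μ : Measure Ω}
    [IsProbabilityMeasure μ] {Z : Ω → ℝ} (hZmeas : Measurable Z) (hZpos : ∀ ω, 0 < Z ω)
    (hZint : Integrable Z μ) {U : ℝ → ℝ} (hU : IsUtility U)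
    (hUcont : ContinuousOn U (Set.Ioi 0))
    (hV : ∀ y : ℝ, 0 < y → eexp μ (fun ω => ((conj U (y * Z ω) : ℝ) : EReal)) < ⊤)
    {X a ε : ℝ} (hX : 0 < X) (ha : 0 < a) (hε : 0 < ε) :
    ∃ η : ℝ, 0 < η ∧ η ≤ 1 ∧ ∀ θ, 0 ≤ θ → θ ≤ η → ∀ f ∈ Cset μ Z X,
      eexp μ (fun ω => Uext U (f ω)) ≤
        eexp μ (fun ω => Uext U (f ω - θ * max (f ω - a) 0)) + (ε : EReal) := by
  set y : ℝ := ε / 4 / X with hy_def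
  have hy : 0 < y := by positivity
  set H : Ω → ℝ := fun ω => |U a| + max (conj U (y * Z ω)) 0 with hH_def
  have hconj : Measurable (fun ω => conj U (y * Z ω)) :=
    measurable_conj_comp hU (hZmeas.const_mul y) fun ω => mul_pos hy (hZpos ω)
  have hH : Measurable H := (hconj.max measurable_const).const_add _
  have hHint : ∫⁻ ω, ENNReal.ofReal (H ω) ∂μ ≠ ⊤ := by
    have : ∀ ω, ENNReal.ofReal (H ω) =
        ENNReal.ofReal |U a| + ENNReal.ofReal (conj U (y * Z ω)) := fun ω => by
      rw [hH_def, ENNReal.ofReal_add (abs_nonneg _) (le_max_right _ _), ENNReal.ofReal_max]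
      simp
    simp only [this]
    rw [lintegral_add_left measurable_const]
    simp [lintegral_conj_ne_top hZpos hZint hU hy (hV y hy)]
  obtain ⟨M, hM, hMint⟩ := exists_small_excess hZmeas hZpos hH hHint (ε := ε / 4) (by positivity)
  -- `K` is chosen so that `M X / K ≤ ε / 4`.
  set K : ℝ := (M + 1) * X / (ε / 4) with hK_def
  have hK : 0 < K := by positivity
  have hMK : M / K * X ≤ ε / 4 := by
    rw [hK_def, div_div_eq_mul_div, div_mul_eq_mul_div, div_le_iff₀ (by positivity)]
    nlinarith [mul_pos hε hX]
  obtain ⟨δ, hδ, hδU⟩ := Metric.uniformContinuousOn_iff.1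
    (isCompact_Icc.uniformContinuousOn_of_continuous
      (hUcont.mono (fun t (ht : t ∈ Set.Icc a K) => ha.trans_le ht.1))) (ε / 4) (by positivity)
  refine ⟨min 1 (δ / (2 * K)), by positivity, min_le_left _ _, fun θ hθ0 hθ f hf => ?_⟩
  have hθ1 : θ ≤ 1 := hθ.trans (min_le_left _ _)
  have hθK : θ * K < δ := by
    have h := hθ.trans (min_le_right _ _)
    rw [le_div_iff₀ (by positivity)] at h
    linarith
  obtain ⟨hfm, hf0, hfX⟩ := hf
  have hne : ∀ t, Uext U t ≠ ⊤ := fun t =>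
    ne_top_of_le_ne_top (b := Uext U (max t 1)) (by
      rw [Uext_of_pos U (by positivity)]; exact EReal.coe_ne_top _)
      (Uext_mono hU (le_max_left _ _))
  have hUm : Measurable (Uext U) := (Uext_mono hU).measurable
  have hgm : Measurable (fun ω => f ω - θ * max (f ω - a) 0) := by fun_prop
  refine eexp_le_add (l := fun ω => ENNReal.ofReal (ε / 4) + ENNReal.ofReal (H ω - M * Z ω)
      + ENNReal.ofReal (M / K + y) * ENNReal.ofReal (Z ω * f ω))
    (hUm.comp hfm) (hUm.comp hgm) (by fun_prop) (fun ω => hne _) (fun ω => hne _)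
    (fun ω => ?_) hε.le ?_
  · have hlr : ENNReal.ofReal (ε / 4) + ENNReal.ofReal (H ω - M * Z ω)
        + ENNReal.ofReal (M / K + y) * ENNReal.ofReal (Z ω * f ω) =
        ENNReal.ofReal (ε / 4 + max (H ω - M * Z ω) 0 + (M / K + y) * (Z ω * f ω)) := by
      exact (ofReal_add_max_add_mul (by positivity) _ (by positivity)
        (mul_nonneg (hZpos ω).le (hf0 ω))).symm
    have hZf : 0 ≤ Z ω * f ω := mul_nonneg (hZpos ω).le (hf0 ω)
    have hl0 : 0 ≤ ε / 4 + max (H ω - M * Z ω) 0 + (M / K + y) * (Z ω * f ω) := by positivity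
    rw [hlr, EReal.coe_ennreal_ofReal, max_eq_left hl0]
    simp only [Function.comp_apply]
    rcases le_or_gt (f ω) a with hfa | hfa
    · rw [max_eq_right (by linarith : f ω - a ≤ 0), mul_zero, sub_zero]
      exact le_add_of_nonneg_right (by exact_mod_cast hl0)
    · have hga := shrink_ge hθ1 hfa.le
      have hg_le : f ω - θ * max (f ω - a) 0 ≤ f ω := by
        have := mul_nonneg hθ0 (le_max_right (f ω - a) 0)
        linarith
      rw [Uext_of_pos U (ha.trans hfa), Uext_of_pos U (ha.trans_le hga)]
      norm_cast
      have hm0 : 0 ≤ max (H ω - M * Z ω) 0 := le_max_right _ _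
      rcases le_or_gt (f ω) K with hfK | hfK
      · have hd := hδU (f ω) ⟨hfa.le, hfK⟩ _ ⟨hga, hg_le.trans hfK⟩ (by
          rw [Real.dist_eq, _root_.sub_sub_cancel, max_eq_left (by linarith), abs_of_nonneg
            (mul_nonneg hθ0 (by linarith))]
          nlinarith)
        rw [Real.dist_eq] at hd
        have := (abs_lt.1 hd).2
        have : 0 ≤ (M / K + y) * (Z ω * f ω) := by positivity
        linarith
      · have h1 := le_conj_add hU (ha.trans hfa) (mul_pos hy (hZpos ω))
        have h2 := hU.mono ha hga
        have h3 := neg_abs_le (U a)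
        have h4 : conj U (y * Z ω) ≤ max (conj U (y * Z ω)) 0 := le_max_left _ _
        have h5 : H ω - M * Z ω ≤ max (H ω - M * Z ω) 0 := le_max_left _ _
        have h6 : M * Z ω ≤ M / K * (Z ω * f ω) := by
          rw [div_mul_eq_mul_div, le_div_iff₀ hK, mul_assoc]
          exact mul_le_mul_of_nonneg_left (mul_le_mul_of_nonneg_left hfK.le (hZpos ω).le) hM
        have h7 : H ω = |U a| + max (conj U (y * Z ω)) 0 := rfl
        have h8 : (M / K + y) * (Z ω * f ω) = M / K * (Z ω * f ω) + f ω * (y * Z ω) := by ring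
        rw [h8]
        linarith
  · have hyX : y * X = ε / 4 := by rw [hy_def]; field_simp
    rw [lintegral_add_right _ (by fun_prop), lintegral_add_left measurable_const,
      lintegral_const_mul _ (by fun_prop)]
    calc _ ≤ ENNReal.ofReal (ε / 4) + ENNReal.ofReal (ε / 4)
          + ENNReal.ofReal (M / K + y) * ENNReal.ofReal X := by
          gcongr
          simp
      _ = ENNReal.ofReal (ε / 4 + ε / 4 + (M / K + y) * X) := by
          have := ofReal_add_max_add_mul (a := ε / 4) (c := M / K + y) (d := X) (by positivity)
            (ε / 4) (by positivity) hX.le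
          rw [max_eq_left (by positivity)] at this
          exact this.symm
      _ ≤ _ := ENNReal.ofReal_le_ofReal (by linarith [add_mul (M / K) y X])

/-! ### The value function -/

lemma lintegral_density {Ω : Type*} [MeasurableSpace Ω] {μ : Measure Ω} {Z : Ω → ℝ}
    (hZpos : ∀ ω, 0 < Z ω) (hZint : Integrable Z μ) (hZexp : ∫ ω, Z ω ∂μ = 1) :
    ∫⁻ ω, ENNReal.ofReal (Z ω) ∂μ = 1 := by
  rw [← ofReal_integral_eq_lintegral_ofReal hZint (ae_of_all _ fun ω => (hZpos ω).le), hZexp]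
  simp

/-- The shrunk claim is dominated by `(1 - θ) f + θ a`, and the constant `a` costs `a` because
`E[Z] = 1`. -/
lemma shrink_mem_Cset {Ω : Type*} [MeasurableSpace Ω] {μ : Measure Ω} {Z : Ω → ℝ}
    (hZmeas : Measurable Z) (hZpos : ∀ ω, 0 < Z ω) (hZint : Integrable Z μ)
    (hZexp : ∫ ω, Z ω ∂μ = 1) {x a θ : ℝ} (hx : 0 ≤ x) (ha : 0 ≤ a) (hθ0 : 0 ≤ θ) (hθ1 : θ ≤ 1)
    {f : Ω → ℝ} (hf : f ∈ Cset μ Z x) :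
    (fun ω => f ω - θ * max (f ω - a) 0) ∈ Cset μ Z ((1 - θ) * x + θ * a) := by
  obtain ⟨hfm, hf0, hfx⟩ := hf
  have h1θ : 0 ≤ 1 - θ := by linarith
  refine ⟨by fun_prop, fun ω => ?_, ?_⟩
  · rcases le_total (f ω) a with h | h
    · simpa [max_eq_right (by linarith : f ω - a ≤ 0)] using hf0 ω
    · exact ha.trans (shrink_ge hθ1 h)
  · calc ∫⁻ ω, ENNReal.ofReal (Z ω * (f ω - θ * max (f ω - a) 0)) ∂μ
        ≤ ∫⁻ ω, (ENNReal.ofReal (1 - θ) * ENNReal.ofReal (Z ω * f ω)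
          + ENNReal.ofReal (θ * a) * ENNReal.ofReal (Z ω)) ∂μ := by
          refine lintegral_mono fun ω => ?_
          have hZf : 0 ≤ Z ω * f ω := mul_nonneg (hZpos ω).le (hf0 ω)
          rw [← ENNReal.ofReal_mul h1θ, ← ENNReal.ofReal_mul (by positivity),
            ← ENNReal.ofReal_add (mul_nonneg h1θ hZf)
              (mul_nonneg (by positivity) (hZpos ω).le)]
          refine ENNReal.ofReal_le_ofReal ?_
          have h : f ω - θ * max (f ω - a) 0 ≤ (1 - θ) * f ω + θ * a := by
            nlinarith [mul_le_mul_of_nonneg_left (le_max_left (f ω - a) 0) hθ0]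
          nlinarith [mul_le_mul_of_nonneg_left h (hZpos ω).le]
      _ = ENNReal.ofReal (1 - θ) * ∫⁻ ω, ENNReal.ofReal (Z ω * f ω) ∂μ
          + ENNReal.ofReal (θ * a) := by
          rw [lintegral_add_left (by fun_prop), lintegral_const_mul _ (by fun_prop),
            lintegral_const_mul _ (by fun_prop), lintegral_density hZpos hZint hZexp, mul_one]
      _ ≤ ENNReal.ofReal (1 - θ) * ENNReal.ofReal x + ENNReal.ofReal (θ * a) := by gcongr
      _ = _ := by
          rw [← ENNReal.ofReal_mul h1θ, ← ENNReal.ofReal_add (by positivity) (by positivity)]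

lemma Cset_mono {Ω : Type*} [MeasurableSpace Ω] (μ : Measure Ω) (Z : Ω → ℝ) :
    Monotone (Cset μ Z) := fun _ _ hxy _ hf =>
  ⟨hf.1, hf.2.1, hf.2.2.trans (ENNReal.ofReal_le_ofReal hxy)⟩

lemma valueFn_mono {Ω : Type*} [MeasurableSpace Ω] (μ : Measure Ω) (Z : Ω → ℝ) (W : ℝ → EReal) :
    Monotone (valueFn μ Z W) := fun _ _ hxy =>
  biSup_mono fun _ hf => Cset_mono μ Z hxy hf

/-- The constant claim `x` belongs to `C(x)` and has finite expected utility `U(x)`. -/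
lemma valueFn_ne_bot {Ω : Type*} [MeasurableSpace Ω] {μ : Measure Ω} [IsProbabilityMeasure μ]
    {Z : Ω → ℝ} (hZmeas : Measurable Z) (hZpos : ∀ ω, 0 < Z ω) (hZint : Integrable Z μ)
    (hZexp : ∫ ω, Z ω ∂μ = 1) (U : ℝ → ℝ) {x : ℝ} (hx : 0 < x) :
    valueFn μ Z (Uext U) x ≠ ⊥ := by
  have hmem : (fun _ : Ω => x) ∈ Cset μ Z x := by
    refine ⟨measurable_const, fun _ => hx.le, ?_⟩
    simp only [ENNReal.ofReal_mul (hZpos _).le]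
    rw [lintegral_mul_const _ (by fun_prop), lintegral_density hZpos hZint hZexp, one_mul]
  refine ne_bot_of_le_ne_bot ?_
    (le_biSup (fun f : Ω → ℝ => eexp μ (fun ω => Uext U (f ω))) hmem)
  simp only [Uext_of_pos U hx, eexp, ← EReal.coe_neg, erealPos_coe, lintegral_const,
    measure_univ, mul_one, ENNReal.ofReal_lt_top, if_true]
  rw [EReal.coe_ennreal_ofReal]
  norm_cast
  exact EReal.coe_ne_bot _

/-- By Fenchel's inequality the value function is at most `E[V(Z)⁺] + x⁺`. -/
lemma valueFn_ne_top {Ω : Type*} [MeasurableSpace Ω] {μ : Measure Ω} [IsProbabilityMeasure μ]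
    {Z : Ω → ℝ} (hZmeas : Measurable Z) (hZpos : ∀ ω, 0 < Z ω) (hZint : Integrable Z μ)
    {U : ℝ → ℝ} (hU : IsUtility U)
    (hV : eexp μ (fun ω => ((conj U (1 * Z ω) : ℝ) : EReal)) < ⊤) (x : ℝ) :
    valueFn μ Z (Uext U) x ≠ ⊤ := by
  have hconj : Measurable (fun ω => conj U (Z ω)) := measurable_conj_comp hU hZmeas hZpos
  have hfin := lintegral_conj_ne_top hZpos hZint hU one_pos hV
  simp only [one_mul] at hfin
  set C : ℝ≥0∞ := ∫⁻ ω, ENNReal.ofReal (conj U (Z ω)) ∂μ + ENNReal.ofReal x with hC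
  have hCt : C ≠ ⊤ := ENNReal.add_ne_top.2 ⟨hfin, ENNReal.ofReal_ne_top⟩
  have hUm : Measurable (Uext U) := (Uext_mono hU).measurable
  have hbound : ∀ t z : ℝ, 0 ≤ t → 0 < z → Uext U t ≤
      ((ENNReal.ofReal (conj U z) + ENNReal.ofReal (z * t) : ℝ≥0∞) : EReal) := by
    intro t z ht hz
    -- At `t = 0` the inequality is the limit of Fenchel's inequality at positive points.
    have hpos : ∀ s : ℝ, 0 < s → U s ≤ max (conj U z) 0 + s * z := fun s hs =>
      (le_conj_add hU hs hz).trans (by gcongr; exact le_max_left _ _)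
    rw [EReal.coe_ennreal_add, EReal.coe_ennreal_ofReal, EReal.coe_ennreal_ofReal,
      max_eq_left (mul_nonneg hz.le ht)]
    rw [← EReal.coe_add]
    refine EReal.le_of_forall_lt_iff_le.1 fun r hr => ?_
    have hr' : max (conj U z) 0 + z * t < r := by exact_mod_cast hr
    set s : ℝ := t + (r - (max (conj U z) 0 + z * t)) / z with hs
    -- `s > t ≥ 0` is the point where the affine bound reaches `r`.
    have hts : t < s := by
      have : 0 < (r - (max (conj U z) 0 + z * t)) / z := div_pos (by linarith) hz
      linarith
    have hsz : s * z = r - max (conj U z) 0 := by rw [hs]; field_simp; ring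
    refine (Uext_mono hU hts.le).trans ?_
    rw [Uext_of_pos U (ht.trans_lt hts)]
    have := hpos s (ht.trans_lt hts)
    exact_mod_cast (by linarith : U s ≤ r)
  have hle : valueFn μ Z (Uext U) x ≤ (C.toReal : EReal) := by
    refine iSup₂_le fun f hf => ?_
    have h0 : eexp μ (fun _ : Ω => (0 : EReal)) = 0 := by simp [eexp, erealPos]
    have := eexp_le_add (μ := μ) (h := fun ω => Uext U (f ω)) (k := fun _ => 0)
      (l := fun ω => ENNReal.ofReal (conj U (Z ω)) + ENNReal.ofReal (Z ω * f ω))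
      (hUm.comp hf.1) measurable_const
      (by have := hf.1; fun_prop)
      (fun ω => ne_top_of_le_ne_top (by
        rw [Ne, EReal.coe_ennreal_eq_top_iff]
        exact ENNReal.add_ne_top.2 ⟨ENNReal.ofReal_ne_top, ENNReal.ofReal_ne_top⟩)
        (hbound (f ω) (Z ω) (hf.2.1 ω) (hZpos ω)))
      (fun ω => EReal.zero_ne_top)
      (fun ω => by rw [zero_add]; exact hbound (f ω) (Z ω) (hf.2.1 ω) (hZpos ω))
      (ε := C.toReal) ENNReal.toReal_nonneg (by
        rw [ENNReal.ofReal_toReal hCt, hC, lintegral_add_left (by fun_prop)]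
        gcongr
        exact hf.2.2)
    rwa [h0, zero_add] at this
  exact ne_top_of_le_ne_top (EReal.coe_ne_top _) hle

/-- Under the dual integrability assumption, if `U` is in addition continuous on
`(0,∞)`, then the value function `x ↦ u(x, U)` is continuous on `(0, ∞)`. -/
theorem value_function_continuous
    {Ω : Type*} [MeasurableSpace Ω] (μ : MeasureTheory.Measure Ω)
    [MeasureTheory.IsProbabilityMeasure μ]
    (Z : Ω → ℝ) (hZmeas : Measurable Z) (hZpos : ∀ ω, 0 < Z ω)
    (hZint : MeasureTheory.Integrable Z μ) (hZexp : ∫ ω, Z ω ∂μ = 1)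
    (U : ℝ → ℝ) (hU : IsUtility U) (hUcont : ContinuousOn U (Set.Ioi 0))
    (hV : ∀ y : ℝ, 0 < y → eexp μ (fun ω => ((conj U (y * Z ω) : ℝ) : EReal)) < ⊤) :
    ContinuousOn (fun x : ℝ => valueFn μ Z (Uext U) x) (Set.Ioi 0) := by
  set u : ℝ → EReal := valueFn μ Z (Uext U) with hu
  have hmono : Monotone u := valueFn_mono μ Z _
  have hbot : ∀ x, 0 < x → u x ≠ ⊥ := fun x hx =>
    valueFn_ne_bot hZmeas hZpos hZint hZexp U hx
  have htop : ∀ x, u x ≠ ⊤ := valueFn_ne_top hZmeas hZpos hZint hU (hV 1 one_pos)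
  have hcoe : ∀ x, 0 < x → u x = ((u x).toReal : EReal) := fun x hx =>
    (EReal.coe_toReal (htop x) (hbot x hx)).symm
  have key : ∀ x₀ : ℝ, 0 < x₀ → ∀ ε : ℝ, 0 < ε → ∃ δ : ℝ, 0 < δ ∧ ∀ x' x : ℝ,
      x₀ / 2 < x' → x' ≤ x → x < 2 * x₀ → x - x' ≤ δ → u x ≤ u x' + (ε : EReal) := by
    intro x₀ hx₀ ε hε
    obtain ⟨η, hη0, hη1, hη⟩ := exists_loss_bound hZmeas hZpos hZint hU hUcont hV
      (X := 2 * x₀) (a := x₀ / 4) (by positivity) (by positivity) hε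
    refine ⟨η * (x₀ / 4), by positivity, fun x' x h1 h2 h3 h4 => iSup₂_le fun f hf => ?_⟩
    -- With `a = x₀ / 4` the fraction `θ` frees at least `θ (x - a) ≥ θ x₀ / 4 = x - x'`.
    set θ : ℝ := (x - x') / (x₀ / 4) with hθ
    have hθ0 : 0 ≤ θ := div_nonneg (by linarith) (by positivity)
    have hθη : θ ≤ η := by rw [hθ, div_le_iff₀ (by positivity)]; exact h4
    have hθx : θ * (x₀ / 4) = x - x' := by rw [hθ]; field_simp
    refine (hη θ hθ0 hθη f (Cset_mono μ Z h3.le hf)).trans ?_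
    gcongr
    refine le_biSup (fun f : Ω → ℝ => eexp μ (fun ω => Uext U (f ω)))
      (Cset_mono μ Z ?_ (shrink_mem_Cset hZmeas hZpos hZint hZexp (by linarith)
        (by positivity : 0 ≤ x₀ / 4) hθ0 (hθη.trans hη1) hf))
    nlinarith [mul_nonneg hθ0 (by linarith : 0 ≤ x - x₀ / 2)]
  have hreal : ContinuousOn (fun x => (u x).toReal) (Set.Ioi 0) := by
    intro x₀ hx₀
    have hx₀ : 0 < x₀ := hx₀
    refine ContinuousAt.continuousWithinAt (Metric.continuousAt_iff.2 fun ε hε => ?_)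
    obtain ⟨δ, hδ, h⟩ := key x₀ hx₀ (ε / 2) (by positivity)
    refine ⟨min δ (x₀ / 2), by positivity, fun x hx => ?_⟩
    rw [Real.dist_eq, lt_min_iff, abs_lt, abs_lt] at hx
    obtain ⟨⟨h1, h2⟩, h3, h4⟩ := hx
    have hx0 : 0 < x := by linarith
    rw [Real.dist_eq, abs_lt]
    rcases le_total x x₀ with hle | hle
    · have e1 := h x x₀ (by linarith) hle (by linarith) (by linarith)
      have e2 := hmono hle
      rw [hcoe x hx0, hcoe x₀ hx₀] at e1 e2
      norm_cast at e1 e2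
      constructor <;> linarith
    · have e1 := h x₀ x (by linarith) hle (by linarith) (by linarith)
      have e2 := hmono hle
      rw [hcoe x hx0, hcoe x₀ hx₀] at e1 e2
      norm_cast at e1 e2
      constructor <;> linarith
  exact (continuous_coe_real_ereal.comp_continuousOn hreal).congr fun x hx => hcoe x hx
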